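/- Let N ≥ 2 and n ≥ N be integers and let L ≥ 0 be a real number with 2L a nonnegative integer. Then for all ζ, η ∈ ℂ the two-point correlation function of the symplectic induced spherical ensemble satisfies R_{N,2}(ζ,η) = (conj(ζ) − ζ)(conj(η) − η)/((1+|ζ|²)(1+|η|²))^{2n+2L+2} · ( κ̂_N(ζ, conj(ζ))·κ̂_N(η, conj(η)) − |κ̂_N(ζ,η)|² + |κ̂_N(ζ, conj(η))|² ). -/

import Mathlib

open MeasureTheory Filter Finset

noncomputable section

namespace SI

/-- The weight `w(ζ) = |ζ|^{4L}(1+|ζ|²)^{-2(n+L+1)}`. -/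
def wfun (n L : ℝ) (ζ : ℂ) : ℝ :=
  ‖ζ‖ ^ (4*L) * (1 + ‖ζ‖ ^ 2) ^ (-(2*(n+L+1)))

/-- The (unnormalised) joint eigenvalue density of the symplectic induced
spherical ensemble. -/
def jointDen (N : ℕ) (n L : ℝ) (ζs : Fin N → ℂ) : ℝ :=
  (∏ j : Fin N, ∏ k ∈ Finset.Ioi j,
     ‖ζs j - ζs k‖ ^ 2 * ‖ζs j - (starRingEnd ℂ) (ζs k)‖ ^ 2) *
  ∏ j : Fin N, (‖ζs j - (starRingEnd ℂ) (ζs j)‖ ^ 2 * wfun n L (ζs j))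

/-- The normalisation constant `Z_N` (the factor `π⁻ᴺ` accounts for `dA = d²ζ/π`). -/
def ZN (N : ℕ) (n L : ℝ) : ℝ :=
  (Real.pi)⁻¹ ^ N * ∫ ζs : Fin N → ℂ, jointDen N n L ζs

/-- The one-point correlation function `R_{N,1}`. -/
def R1 (N : ℕ) (n L : ℝ) (ζ : ℂ) : ℝ :=
  N * (ZN N n L)⁻¹ * (Real.pi)⁻¹ ^ (N-1) *
    ∫ ζs : Fin (N-1) → ℂ, jointDen (N-1+1) n L (Fin.cons ζ ζs)

/-- The two-point correlation function `R_{N,2}`. -/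
def R2 (N : ℕ) (n L : ℝ) (ζ η : ℂ) : ℝ :=
  (N * (N-1) : ℝ) * (ZN N n L)⁻¹ * (Real.pi)⁻¹ ^ (N-2) *
    ∫ ζs : Fin (N-2) → ℂ, jointDen (N-2+1+1) n L (Fin.cons ζ (Fin.cons η ζs))

/-- The kernel `G_N(ζ,η)` built from the skew-orthogonal polynomials of the
symplectic induced spherical ensemble (all powers are principal-branch `cpow`s,
which agree with the integer powers whenever `2L` is a nonnegative integer). -/
def GK (N : ℕ) (n L : ℝ) (ζ η : ℂ) : ℂ :=
  ((Real.pi : ℂ) * Complex.Gamma ((2*n+2*L+2 : ℝ) : ℂ) / (2:ℂ) ^ ((2*n+2*L+1 : ℝ) : ℂ)) *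
  ∑ k ∈ range N, ∑ l ∈ range (k+1),
    ζ ^ ((2*k+2*L+1 : ℝ) : ℂ) * η ^ ((2*l+2*L : ℝ) : ℂ) /
      (Complex.Gamma ((k+L+3/2 : ℝ) : ℂ) * Complex.Gamma ((n-k : ℝ) : ℂ) *
       Complex.Gamma ((n-l+1/2 : ℝ) : ℂ) * Complex.Gamma ((l+L+1 : ℝ) : ℂ))

/-- The skew-symmetric kernel `κ̂_N(ζ,η) = G_N(ζ,η) - G_N(η,ζ)`. -/
def KK (N : ℕ) (n L : ℝ) (ζ η : ℂ) : ℂ := GK N n L ζ η - GK N n L η ζ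

/-!
Adjoining to each point its conjugate turns the joint density into a Vandermonde determinant,
hence into the top-degree coefficient of the product of the bivectors
`ω(ζⱼ) = (ζⱼ - ζ̄ⱼ) w(ζⱼ) v(ζⱼ) ∧ v(ζ̄ⱼ)`, where `v(x) = (1, x, …, x^(2N-1))`. Integrating out a
point replaces its bivector by the mean `Ω` of `ω`, so `Z_N` is the coefficient of `Ω ^ N` and
`R_{N,2}` comes from `ω(ζ) ∧ ω(η) ∧ Ω ^ (N-2)`. Contracting forms of degree above `2N`, which
vanish, with the inverse `C` of the skew-symmetric matrix of `Ω` writes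
`N (N-1) x ∧ y ∧ z ∧ t ∧ Ω ^ (N-2)` as the Pfaffian of the values of `C` at `x, y, z, t` times
`Ω ^ N`. By rotation invariance this matrix is supported on the two diagonals next to the main one,
where its entries are Beta values. The duplication formula rescales it to a Toeplitz matrix with
entries `±1`, and the inverse of the latter is the double sum defining `κ̂_N`.
-/

open ExteriorAlgebra (ι)
open CliffordAlgebra (contractLeft contractLeft_ι_mul)
open Module (Dual)

section ExteriorPowers

variable {R V : Type*} [CommRing R] [AddCommGroup V] [Module R V]

theorem ι_mul_ι_swap (x y : V) : ι R x * ι R y = -(ι R y * ι R x) :=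
  eq_neg_of_add_eq_zero_left (ExteriorAlgebra.ι_add_mul_swap x y)

theorem ι_mul_mem_exteriorPower (x : V) {k : ℕ} {a : ExteriorAlgebra R V} (ha : a ∈ ⋀[R]^k V) :
    ι R x * a ∈ ⋀[R]^(k + 1) V := by
  change _ ∈ LinearMap.range (ι R) ^ (k + 1)
  rw [pow_succ']
  exact Submodule.mul_mem_mul ⟨x, rfl⟩ ha

theorem eq_zero_of_mem_exteriorPower [Nontrivial R] [Module.Free R V] [Module.Finite R V] {k : ℕ}
    (hk : Module.finrank R V < k) {a : ExteriorAlgebra R V} (ha : a ∈ ⋀[R]^k V) : a = 0 := by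
  have : Subsingleton (⋀[R]^k V) := by
    rw [← Module.finrank_eq_zero_iff_of_free (R := R), exteriorPower.finrank_eq,
      Nat.choose_eq_zero_of_lt hk]
  exact congrArg Subtype.val (Subsingleton.elim (⟨a, ha⟩ : ⋀[R]^k V) 0)

end ExteriorPowers

section Bivector

variable {R α : Type*} [CommRing R] [Fintype α] [DecidableEq α]

/-- The bivector `∑ᵢⱼ Aᵢⱼ eᵢ ∧ eⱼ` of a square matrix `A`; only the skew part of `A` matters. -/
def bivector (A : Matrix α α R) : ExteriorAlgebra R (α → R) :=
  ∑ i, ∑ j, A i j • (ι R (Pi.single i (1 : R)) * ι R (Pi.single j 1))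

theorem bivector_eq_sum_offDiag (A : Matrix α α R) :
    bivector A = ∑ p ∈ univ.offDiag,
      A p.1 p.2 • (ι R (Pi.single p.1 (1 : R)) * ι R (Pi.single p.2 1)) := by
  rw [bivector, ← Fintype.sum_prod_type']
  refine (sum_subset (subset_univ _) fun p _ hp => ?_).symm
  have hdiag : p.1 = p.2 := by simpa using hp
  rw [hdiag, ExteriorAlgebra.ι_sq_zero, smul_zero]

theorem ι_mul_ι_eq_bivector (x y : α → R) : ι R x * ι R y = bivector (Matrix.vecMulVec x y) := by
  have hι (u : α → R) : ι R u = ∑ i, u i • ι R (Pi.single i 1) := by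
    simp only [← map_smul, ← map_sum]
    congr 1
    ext j
    simp [Pi.single_apply]
  simp only [hι x, hι y, bivector, sum_mul_sum, Matrix.vecMulVec_apply, smul_mul_smul_comm]

theorem bivector_smul (r : R) (A : Matrix α α R) : bivector (r • A) = r • bivector A := by
  simp only [bivector, smul_sum, smul_smul, Matrix.smul_apply, smul_eq_mul]

theorem commute_bivector_ι (A : Matrix α α R) (x : α → R) : Commute (bivector A) (ι R x) := by
  refine Commute.sum_left _ _ _ fun i _ => Commute.sum_left _ _ _ fun j _ => .smul_left ?_ _
  rw [commute_iff_eq, mul_assoc, ι_mul_ι_swap _ x, mul_neg, ← mul_assoc, ι_mul_ι_swap _ x, neg_mul,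
    neg_neg, mul_assoc]

theorem bivector_pow_mem_exteriorPower (A : Matrix α α R) (m : ℕ) :
    bivector A ^ m ∈ ⋀[R]^(2 * m) (α → R) := by
  change _ ∈ LinearMap.range (ι R) ^ (2 * m)
  rw [pow_mul]
  refine Submodule.pow_mem_pow _ (sum_mem fun i _ => sum_mem fun j _ => Submodule.smul_mem _ _ ?_) m
  rw [pow_two]
  exact Submodule.mul_mem_mul ⟨_, rfl⟩ ⟨_, rfl⟩

theorem contractLeft_bivector_mul (A : Matrix α α R) (d : Dual R (α → R))
    (c : ExteriorAlgebra R (α → R)) :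
    contractLeft d (bivector A * c) =
      ι R ((A.transpose - A).mulVec fun i => d (Pi.single i 1)) * c +
        bivector A * contractLeft d c := by
  have hvec : ((A.transpose - A).mulVec fun i => d (Pi.single i 1)) =
      ∑ i, ∑ j, A i j •
        (d (Pi.single i 1) • Pi.single j 1 - d (Pi.single j 1) • Pi.single i 1) := by
    ext k
    simp [Matrix.mulVec, dotProduct, Finset.sum_apply, Pi.single_apply, sub_mul, mul_sub]
  rw [hvec]
  simp only [bivector, map_sum, map_smul, map_sub, sum_mul, ← sum_add_distrib]
  refine sum_congr rfl fun i _ => sum_congr rfl fun j _ => ?_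
  simp only [smul_mul_assoc, sub_mul, map_smul, mul_assoc, contractLeft_ι_mul, mul_sub,
    mul_smul_comm]
  module

variable {A C : Matrix α α R}

theorem contractLeft_flip_toBilin'_bivector_mul (hAC : (A - A.transpose) * C = 1) (y : α → R)
    (c : ExteriorAlgebra R (α → R)) :
    contractLeft (C.toBilin'.flip y) (bivector A * c) =
      bivector A * contractLeft (C.toBilin'.flip y) c - ι R y * c := by
  have hCy : (fun i => C.toBilin'.flip y (Pi.single i 1)) = C.mulVec y := by
    ext i
    simp [Matrix.toBilin'_apply', Matrix.mulVec, single_dotProduct]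
  rw [contractLeft_bivector_mul, hCy, Matrix.mulVec_mulVec, ← neg_sub A, neg_mul, hAC,
    Matrix.neg_mulVec, Matrix.one_mulVec, map_neg, neg_mul]
  abel

theorem contractLeft_flip_toBilin'_bivector_pow (hAC : (A - A.transpose) * C = 1) (y : α → R)
    (m : ℕ) :
    contractLeft (C.toBilin'.flip y) (bivector A ^ (m + 1)) =
      -((m + 1 : R) • (ι R y * bivector A ^ m)) := by
  induction m with
  | zero =>
    have h := contractLeft_flip_toBilin'_bivector_mul hAC y 1
    rw [CliffordAlgebra.contractLeft_one] at h
    simpa using h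
  | succ m ih =>
    rw [pow_succ' _ (m + 1), contractLeft_flip_toBilin'_bivector_mul hAC, ih, mul_neg,
      mul_smul_comm, ← mul_assoc, (commute_bivector_ι A y).eq, mul_assoc, ← pow_succ']
    push_cast
    module

variable [Nontrivial R]

-- The form `x ∧ bivector A ^ (m + 1)` vanishes, its degree being `2 * m + 3`; contract it.
theorem ι_mul_ι_mul_bivector_pow (hAC : (A - A.transpose) * C = 1) {m : ℕ}
    (hm : Fintype.card α = 2 * (m + 1)) (x y : α → R) :
    (m + 1 : R) • (ι R x * (ι R y * bivector A ^ m)) =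
      -(C.toBilin' x y • bivector A ^ (m + 1)) := by
  have h : ι R x * bivector A ^ (m + 1) = 0 :=
    eq_zero_of_mem_exteriorPower (by rw [Module.finrank_fintype_fun_eq_card]; omega)
      (ι_mul_mem_exteriorPower x (bivector_pow_mem_exteriorPower A (m + 1)))
  have h' := congrArg (contractLeft (C.toBilin'.flip y)) h
  rw [contractLeft_ι_mul, contractLeft_flip_toBilin'_bivector_pow hAC, map_zero,
    mul_neg, sub_neg_eq_add, mul_smul_comm] at h'
  exact eq_neg_of_add_eq_zero_right h'

theorem ι_mul_ι_mul_ι_mul_ι_mul_bivector_pow (hAC : (A - A.transpose) * C = 1) {m : ℕ}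
    (hm : Fintype.card α = 2 * (m + 2)) (x y z t : α → R) :
    ((m + 2 : R) * (m + 1)) • (ι R x * (ι R y * (ι R z * (ι R t * bivector A ^ m)))) =
      (C.toBilin' x y * C.toBilin' z t - C.toBilin' x z * C.toBilin' y t +
        C.toBilin' x t * C.toBilin' y z) • bivector A ^ (m + 2) := by
  have h : ι R x * (ι R y * (ι R z * bivector A ^ (m + 1))) = 0 :=
    eq_zero_of_mem_exteriorPower (by rw [Module.finrank_fintype_fun_eq_card]; omega)
      (ι_mul_mem_exteriorPower x <| ι_mul_mem_exteriorPower y <| ι_mul_mem_exteriorPower z <|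
        bivector_pow_mem_exteriorPower A (m + 1))
  have hexp := congrArg (contractLeft (C.toBilin'.flip t)) h
  rw [contractLeft_ι_mul, contractLeft_ι_mul, contractLeft_ι_mul,
    contractLeft_flip_toBilin'_bivector_pow hAC, map_zero] at hexp
  simp only [mul_sub, mul_neg, mul_smul_comm, mul_add, sub_neg_eq_add,
    LinearMap.BilinForm.flip_apply] at hexp
  have hpair (u v : α → R) : (m + 2 : R) • (ι R u * (ι R v * bivector A ^ (m + 1))) =
      -(C.toBilin' u v • bivector A ^ (m + 2)) := by
    have := ι_mul_ι_mul_bivector_pow hAC (m := m + 1) hm u v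
    push_cast at this
    rw [← this]
    congr 1
    ring
  linear_combination (norm := module) (m + 2 : R) • hexp - C.toBilin' x t • hpair y z
    + C.toBilin' y t • hpair x z - C.toBilin' z t • hpair x y

end Bivector

section Interleave

/-- The interleaved tuple `x₀, y₀, x₁, y₁, …`. -/
def interleave {X : Type*} : {m : ℕ} → (Fin m → X) → (Fin m → X) → Fin (2 * m) → X
  | 0, _, _ => Fin.elim0
  | _ + 1, x, y => Fin.cons (x 0) (Fin.cons (y 0) (interleave (Fin.tail x) (Fin.tail y)))

theorem prod_ofFn_interleave {X M : Type*} [Monoid M] (F : X → M) {m : ℕ} (x y : Fin m → X) :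
    (List.ofFn fun i => F (interleave x y i)).prod =
      (List.ofFn fun j => F (x j) * F (y j)).prod := by
  induction m with
  | zero => rfl
  | succ m ih =>
    rw [List.ofFn_succ (n := m), List.ofFn_succ (n := 2 * m + 1), List.ofFn_succ (n := 2 * m)]
    simp only [List.prod_cons, interleave, Fin.cons_zero, Fin.cons_succ, mul_assoc]
    rw [ih]
    simp only [Fin.tail]

theorem prod_prod_Ioi_interleave_sub {R : Type*} [CommRing R] {m : ℕ} (x y : Fin m → R) :
    ∏ i, ∏ j ∈ Ioi i, (interleave x y j - interleave x y i) =
      (∏ j, ∏ k ∈ Ioi j, (x k - x j) * (y k - x j) * ((x k - y j) * (y k - y j))) *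
        ∏ j, (y j - x j) := by
  induction m with
  | zero => simp
  | succ m ih =>
    have hprod (c : R) : ∏ i, (interleave (Fin.tail x) (Fin.tail y) i - c) =
        ∏ j, (Fin.tail x j - c) * (Fin.tail y j - c) := by
      simpa only [List.prod_ofFn] using
        prod_ofFn_interleave (fun u => u - c) (Fin.tail x) (Fin.tail y)
    change ∏ i : Fin (2 * m + 1 + 1), ∏ j ∈ Ioi i, (interleave x y j - interleave x y i) = _
    rw [Fin.prod_univ_succ (n := m), Fin.prod_univ_succ (n := m),
      Fin.prod_univ_succ (n := 2 * m + 1), Fin.prod_univ_succ (n := 2 * m)]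
    simp only [Fin.prod_Ioi_zero, Fin.prod_Ioi_succ, interleave, Fin.cons_zero, Fin.cons_succ]
    rw [Fin.prod_univ_succ (n := 2 * m)]
    simp only [Fin.cons_zero, Fin.cons_succ]
    rw [ih, hprod, hprod]
    simp only [Fin.tail, prod_mul_distrib]
    ring

end Interleave

section DetFunctional

variable {R : Type*} [CommRing R]

/-- The linear functional on the exterior algebra of `Rᵏ` sending `v₁ ∧ ⋯ ∧ v_k` to
`det (v₁, …, v_k)` and vanishing in all degrees other than `k`. -/
def detFunctional (R : Type*) [CommRing R] (k : ℕ) : ExteriorAlgebra R (Fin k → R) →ₗ[R] R :=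
  ExteriorAlgebra.liftAlternating (Pi.single k Matrix.detRowAlternating)

theorem detFunctional_prod_ofFn_ι {k : ℕ} (v : Fin k → Fin k → R) :
    detFunctional R k (List.ofFn fun i => ι R (v i)).prod = (Matrix.of v).det := by
  rw [← ExteriorAlgebra.ιMulti_apply, detFunctional, ExteriorAlgebra.liftAlternating_apply_ιMulti,
    Pi.single_eq_same]
  rfl

/-- The vector `(1, x, …, x^(k-1))`. -/
def powerVec (k : ℕ) (x : R) : Fin k → R := fun i => x ^ (i : ℕ)

theorem detFunctional_prod_ofFn_ι_powerVec {m : ℕ} (x y : Fin m → R) :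
    detFunctional R (2 * m)
        (List.ofFn fun j => ι R (powerVec (2 * m) (x j)) * ι R (powerVec (2 * m) (y j))).prod =
      (∏ j, ∏ k ∈ Ioi j, (x k - x j) * (y k - x j) * ((x k - y j) * (y k - y j))) *
        ∏ j, (y j - x j) := by
  rw [← prod_ofFn_interleave fun u => ι R (powerVec (2 * m) u), detFunctional_prod_ofFn_ι,
    ← prod_prod_Ioi_interleave_sub, ← Matrix.det_vandermonde]
  rfl

end DetFunctional

section JointDensity

variable {n L : ℝ}

/-- The weight `(z - z̄) w(z)` in which the joint density becomes a determinant. -/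
def skewWeight (n L : ℝ) (z : ℂ) : ℂ := (z - starRingEnd ℂ z) * wfun n L z

/-- The matrix `(z - z̄) w(z) · v(z) v(z̄)ᵀ` with `v = powerVec k`, whose bivector is the factor
that the point `z` contributes to the joint density. -/
def pointMatrix (n L : ℝ) (k : ℕ) (z : ℂ) : Matrix (Fin k) (Fin k) ℂ :=
  skewWeight n L z • Matrix.vecMulVec (powerVec k z) (powerVec k (starRingEnd ℂ z))

theorem bivector_pointMatrix (k : ℕ) (z : ℂ) :
    bivector (pointMatrix n L k z) =
      skewWeight n L z • (ι ℂ (powerVec k z) * ι ℂ (powerVec k (starRingEnd ℂ z))) := by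
  rw [pointMatrix, bivector_smul, ι_mul_ι_eq_bivector]

theorem ofReal_jointDen {m : ℕ} (z : Fin m → ℂ) :
    (jointDen m n L z : ℂ) =
      detFunctional ℂ (2 * m)
        (List.ofFn fun j => bivector (pointMatrix n L (2 * m) (z j))).prod := by
  have hsmul : (List.ofFn fun j => bivector (pointMatrix n L (2 * m) (z j))).prod =
      (∏ j, skewWeight n L (z j)) • (List.ofFn fun j => ι ℂ (powerVec (2 * m) (z j)) *
        ι ℂ (powerVec (2 * m) (starRingEnd ℂ (z j)))).prod := by
    simpa only [bivector_pointMatrix, MultilinearMap.mkPiAlgebraFin_apply] using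
      (MultilinearMap.mkPiAlgebraFin ℂ m _).map_smul_univ _ _
  have hpair (u v : ℂ) : ((‖u - v‖ ^ 2 * ‖u - starRingEnd ℂ v‖ ^ 2 : ℝ) : ℂ) =
      (v - u) * (starRingEnd ℂ v - u) *
        ((v - starRingEnd ℂ u) * (starRingEnd ℂ v - starRingEnd ℂ u)) := by
    push_cast
    simp only [← Complex.mul_conj', map_sub, Complex.conj_conj]
    ring
  have hpoint (u : ℂ) : ((‖u - starRingEnd ℂ u‖ ^ 2 * wfun n L u : ℝ) : ℂ) =
      skewWeight n L u * (starRingEnd ℂ u - u) := by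
    push_cast
    simp only [skewWeight, ← Complex.mul_conj', map_sub, Complex.conj_conj]
    ring
  rw [hsmul, map_smul, detFunctional_prod_ofFn_ι_powerVec, smul_eq_mul, jointDen]
  simp only [Complex.ofReal_mul _ (∏ _, _), Complex.ofReal_prod, hpair, hpoint]
  rw [prod_mul_distrib]
  ring

end JointDensity

section ProductIntegration

theorem map_prod_ofFn_sum_smul {𝕜 𝓐 P : Type*} [CommRing 𝕜] [Ring 𝓐] [Algebra 𝕜 𝓐]
    (φ : 𝓐 →ₗ[𝕜] 𝕜) (s : Finset P) (b : P → 𝓐) {m : ℕ} (c : Fin m → P → 𝕜) :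
    φ (List.ofFn fun j => ∑ p ∈ s, c j p • b p).prod =
      ∑ r ∈ Fintype.piFinset fun _ => s,
        (∏ j, c j (r j)) * φ (List.ofFn fun j => b (r j)).prod := by
  have h := (MultilinearMap.mkPiAlgebraFin 𝕜 m 𝓐).map_sum_finset (fun j p => c j p • b p)
    fun _ => s
  simp only [MultilinearMap.map_smul_univ, MultilinearMap.mkPiAlgebraFin_apply] at h
  rw [h, map_sum]
  simp only [map_smul, smul_eq_mul]

variable {𝕜 X : Type*} [RCLike 𝕜] [MeasurableSpace X] {μ : Measure X} [SigmaFinite μ]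

section Algebra

variable {𝓐 P : Type*} [Ring 𝓐] [Algebra 𝕜 𝓐] (φ : 𝓐 →ₗ[𝕜] 𝕜) {s : Finset P} (b : P → 𝓐)
  {f : P → X → 𝕜}

theorem integrable_map_prod_ofFn_sum_smul (hf : ∀ p ∈ s, Integrable (f p) μ) (m : ℕ) :
    Integrable (fun x : Fin m → X => φ (List.ofFn fun j => ∑ p ∈ s, f p (x j) • b p).prod)
      (Measure.pi fun _ => μ) := by
  simp only [map_prod_ofFn_sum_smul φ s b fun _ p => f p _]
  exact integrable_finsetSum _ fun r hr => (Integrable.fintype_prod fun j =>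
    hf _ (Fintype.mem_piFinset.1 hr j)).mul_const _

theorem integral_map_prod_ofFn_sum_smul (hf : ∀ p ∈ s, Integrable (f p) μ) (m : ℕ) :
    ∫ x : Fin m → X, φ (List.ofFn fun j => ∑ p ∈ s, f p (x j) • b p).prod
        ∂Measure.pi (fun _ => μ) =
      φ ((∑ p ∈ s, (∫ x, f p x ∂μ) • b p) ^ m) := by
  have hpow : (∑ p ∈ s, (∫ x, f p x ∂μ) • b p) ^ m =
      (List.ofFn fun _ : Fin m => ∑ p ∈ s, (∫ x, f p x ∂μ) • b p).prod := by simp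
  rw [hpow, map_prod_ofFn_sum_smul φ s b fun _ p => ∫ x, f p x ∂μ]
  simp only [map_prod_ofFn_sum_smul φ s b fun _ p => f p _]
  rw [integral_finsetSum _ fun r hr => (Integrable.fintype_prod fun j =>
    hf _ (Fintype.mem_piFinset.1 hr j)).mul_const _]
  simp only [integral_mul_const, integral_fintype_prod_eq_prod]

end Algebra

section Bivector

variable {α : Type*} [Fintype α] [DecidableEq α] (φ : ExteriorAlgebra 𝕜 (α → 𝕜) →ₗ[𝕜] 𝕜)
  {F : X → Matrix α α 𝕜}

theorem integrable_map_prod_ofFn_bivector (hF : ∀ i j, i ≠ j → Integrable (fun x => F x i j) μ)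
    (m : ℕ) :
    Integrable (fun x : Fin m → X => φ (List.ofFn fun j => bivector (F (x j))).prod)
      (Measure.pi fun _ => μ) := by
  simp only [bivector_eq_sum_offDiag]
  convert integrable_map_prod_ofFn_sum_smul (μ := μ) φ (s := univ.offDiag)
    (fun p : α × α => ι 𝕜 (Pi.single p.1 (1 : 𝕜)) * ι 𝕜 (Pi.single p.2 1))
    (f := fun p x => F x p.1 p.2) (fun p hp => hF p.1 p.2 (mem_offDiag.1 hp).2.2) m using 1

theorem integral_map_prod_ofFn_bivector (hF : ∀ i j, i ≠ j → Integrable (fun x => F x i j) μ)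
    {A : Matrix α α 𝕜} (hA : ∀ i j, i ≠ j → ∫ x, F x i j ∂μ = A i j) (m : ℕ) :
    ∫ x : Fin m → X, φ (List.ofFn fun j => bivector (F (x j))).prod ∂Measure.pi (fun _ => μ) =
      φ (bivector A ^ m) := by
  have hsum : bivector A = ∑ p ∈ univ.offDiag, (∫ x, F x p.1 p.2 ∂μ) •
      (ι 𝕜 (Pi.single p.1 (1 : 𝕜)) * ι 𝕜 (Pi.single p.2 1)) := by
    rw [bivector_eq_sum_offDiag]
    exact sum_congr rfl fun p hp => by rw [hA _ _ (mem_offDiag.1 hp).2.2]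
  rw [hsum]
  simp only [bivector_eq_sum_offDiag]
  convert integral_map_prod_ofFn_sum_smul (μ := μ) φ (s := univ.offDiag)
    (fun p : α × α => ι 𝕜 (Pi.single p.1 (1 : 𝕜)) * ι 𝕜 (Pi.single p.2 1))
    (f := fun p x => F x p.1 p.2) (fun p hp => hF p.1 p.2 (mem_offDiag.1 hp).2.2) m using 1

end Bivector

end ProductIntegration

section BetaIntegral

open ProbabilityTheory (beta)

variable {s t : ℝ}

theorem integrableOn_Ioo_rpow_mul_one_sub_rpow (hs : 0 < s) (ht : 0 < t) :
    IntegrableOn (fun x : ℝ => x ^ (s - 1) * (1 - x) ^ (t - 1)) (Set.Ioo 0 1) := by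
  have h := Complex.betaIntegral_convergent (u := s) (v := t) (by simpa) (by simpa)
  rw [intervalIntegrable_iff_integrableOn_Ioo_of_le zero_le_one] at h
  refine IntegrableOn.congr_fun h.re (fun x hx => ?_) measurableSet_Ioo
  simp only [RCLike.re_to_complex]
  norm_cast
  rw [← Complex.ofReal_cpow hx.1.le, ← Complex.ofReal_cpow (sub_nonneg.2 hx.2.le)]
  norm_cast

theorem integral_Ioo_rpow_mul_one_sub_rpow (hs : 0 < s) (ht : 0 < t) :
    ∫ x in Set.Ioo (0 : ℝ) 1, x ^ (s - 1) * (1 - x) ^ (t - 1) = beta s t := by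
  apply Complex.ofReal_injective
  rw [beta, ← integral_complex_ofReal]
  push_cast
  rw [← Complex.Gamma_ofReal, ← Complex.Gamma_ofReal, ← Complex.Gamma_ofReal, Complex.ofReal_add,
    ← Complex.betaIntegral_eq_Gamma_mul_div _ _ (by simpa) (by simpa), Complex.betaIntegral,
    intervalIntegral.integral_of_le zero_le_one, ← integral_Ioc_eq_integral_Ioo]
  refine setIntegral_congr_fun measurableSet_Ioc fun x hx => ?_
  push_cast [Complex.ofReal_cpow hx.1.le, Complex.ofReal_cpow (sub_nonneg.2 hx.2)]
  rfl

theorem image_sq_div_one_add_sq_Ioi :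
    (fun y : ℝ => y ^ 2 / (1 + y ^ 2)) '' Set.Ioi 0 = Set.Ioo 0 1 := by
  ext x
  constructor
  · rintro ⟨y, hy, rfl⟩
    have hy : 0 < y := hy
    exact ⟨by positivity, (div_lt_one (by positivity)).2 (by linarith)⟩
  · rintro ⟨h0, h1⟩
    have h1' : 0 < 1 - x := sub_pos.2 h1
    refine ⟨√(x / (1 - x)), Real.sqrt_pos.2 (div_pos h0 h1'), ?_⟩
    simp only [Real.sq_sqrt (div_pos h0 h1').le]
    field_simp
    ring

theorem injOn_sq_div_one_add_sq :
    Set.InjOn (fun y : ℝ => y ^ 2 / (1 + y ^ 2)) (Set.Ioi 0) := by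
  intro x hx y hy h
  simp only at h
  rw [div_eq_div_iff (by positivity) (by positivity)] at h
  exact (sq_eq_sq₀ (Set.mem_Ioi.1 hx).le (Set.mem_Ioi.1 hy).le).1 (by linarith)

theorem hasDerivAt_sq_div_one_add_sq (y : ℝ) :
    HasDerivAt (fun y : ℝ => y ^ 2 / (1 + y ^ 2)) (2 * y / (1 + y ^ 2) ^ 2) y := by
  have h := hasDerivAt_pow 2 y
  refine (h.div (h.const_add 1) (by positivity)).congr_deriv ?_
  congr 1
  push_cast
  ring

theorem abs_deriv_smul_beta_integrand {y : ℝ} (hy : 0 < y) :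
    |2 * y / (1 + y ^ 2) ^ 2| •
        ((y ^ 2 / (1 + y ^ 2)) ^ (s - 1) * (1 - y ^ 2 / (1 + y ^ 2)) ^ (t - 1)) =
      2 * (y ^ (2 * s - 1) * (1 + y ^ 2) ^ (-(s + t))) := by
  have hp : 0 < 1 + y ^ 2 := by positivity
  have h1 : 1 - y ^ 2 / (1 + y ^ 2) = (1 + y ^ 2)⁻¹ := by field_simp; ring
  have h2 : (y ^ 2) ^ (s - 1) * y = y ^ (2 * s - 1) := by
    rw [← Real.rpow_natCast, ← Real.rpow_mul hy.le, ← Real.rpow_add_one hy.ne']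
    congr 1
    push_cast
    ring
  have h3 : ((1 + y ^ 2) ^ (s - 1))⁻¹ * ((1 + y ^ 2) ^ (t - 1))⁻¹ * ((1 + y ^ 2) ^ 2)⁻¹ =
      (1 + y ^ 2) ^ (-(s + t)) := by
    rw [← Real.rpow_natCast (1 + y ^ 2) 2, ← mul_inv, ← mul_inv, ← Real.rpow_add hp,
      ← Real.rpow_add hp, ← Real.rpow_neg hp.le]
    congr 1
    push_cast
    ring
  rw [abs_of_pos (by positivity), h1, Real.div_rpow (by positivity) hp.le, Real.inv_rpow hp.le,
    ← h2, ← h3, smul_eq_mul]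
  ring

theorem integrableOn_Ioi_rpow_mul_one_add_sq_rpow (hs : 0 < s) (ht : 0 < t) :
    IntegrableOn (fun y : ℝ => y ^ (2 * s - 1) * (1 + y ^ 2) ^ (-(s + t))) (Set.Ioi 0) := by
  have h := integrableOn_Ioo_rpow_mul_one_sub_rpow hs ht
  rw [← image_sq_div_one_add_sq_Ioi, integrableOn_image_iff_integrableOn_abs_deriv_smul
    measurableSet_Ioi (fun y _ => (hasDerivAt_sq_div_one_add_sq y).hasDerivWithinAt)
    injOn_sq_div_one_add_sq] at h
  have h' := h.congr_fun (fun y hy => abs_deriv_smul_beta_integrand hy) measurableSet_Ioi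
  exact (integrable_const_mul_iff (c := (2 : ℝ)) (by simp) _).1 h'

theorem integral_Ioi_rpow_mul_one_add_sq_rpow (hs : 0 < s) (ht : 0 < t) :
    ∫ y in Set.Ioi (0 : ℝ), y ^ (2 * s - 1) * (1 + y ^ 2) ^ (-(s + t)) = beta s t / 2 := by
  have h := integral_Ioo_rpow_mul_one_sub_rpow hs ht
  rw [← image_sq_div_one_add_sq_Ioi, integral_image_eq_integral_abs_deriv_smul
    measurableSet_Ioi (fun y _ => (hasDerivAt_sq_div_one_add_sq y).hasDerivWithinAt)
    injOn_sq_div_one_add_sq, setIntegral_congr_fun measurableSet_Ioi fun y hy =>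
      abs_deriv_smul_beta_integrand hy, integral_const_mul] at h
  rw [← h]
  ring

end BetaIntegral

section Moments

open ProbabilityTheory (beta)

theorem integral_pow_mul_conj_pow_mul_norm_eq_zero (F : ℝ → ℂ) {a b : ℕ} (hab : a ≠ b) :
    ∫ z : ℂ, z ^ a * starRingEnd ℂ z ^ b * F ‖z‖ = 0 := by
  set θ : ℝ := Real.pi / ((a : ℝ) - b)
  have hθ : (a : ℝ) * θ - b * θ = Real.pi := by
    rw [← sub_mul]
    exact mul_div_cancel₀ _ (sub_ne_zero.2 (by exact_mod_cast hab))
  have hfactor : (Circle.exp θ : ℂ) ^ a * starRingEnd ℂ (Circle.exp θ) ^ b = -1 := by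
    rw [Circle.coe_exp, ← Complex.exp_conj, ← Complex.exp_nat_mul, ← Complex.exp_nat_mul,
      ← Complex.exp_add, ← Complex.exp_pi_mul_I, ← hθ]
    congr 1
    simp only [map_mul, Complex.conj_ofReal, Complex.conj_I]
    push_cast
    ring
  have hrot := (rotation (Circle.exp θ)).measurePreserving.integral_comp
    (rotation (Circle.exp θ)).toHomeomorph.measurableEmbedding
    fun z => z ^ a * starRingEnd ℂ z ^ b * F ‖z‖
  have hneg (z : ℂ) : rotation (Circle.exp θ) z ^ a *
      starRingEnd ℂ (rotation (Circle.exp θ) z) ^ b * F ‖rotation (Circle.exp θ) z‖ =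
        -(z ^ a * starRingEnd ℂ z ^ b * F ‖z‖) := by
    rw [LinearIsometryEquiv.norm_map, rotation_apply, map_mul, mul_pow, mul_pow]
    linear_combination (z ^ a * starRingEnd ℂ z ^ b * F ‖z‖) * hfactor
  simp only [hneg, integral_neg] at hrot
  exact self_eq_neg.1 hrot.symm

variable {n L : ℝ} {p : ℕ}

theorem pow_mul_wfun_ofReal {y : ℝ} (hy : 0 < y) :
    y * (y ^ p * wfun n L y) =
      y ^ (2 * ((p : ℝ) / 2 + 2 * L + 1) - 1) *
        (1 + y ^ 2) ^ (-((p : ℝ) / 2 + 2 * L + 1 + (2 * n + 1 - (p : ℝ) / 2))) := by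
  have h1 : y ^ (2 * ((p : ℝ) / 2 + 2 * L + 1) - 1) = y * (y ^ p * y ^ (4 * L)) := by
    rw [← Real.rpow_natCast, ← Real.rpow_add hy, mul_comm y, ← Real.rpow_add_one hy.ne']
    congr 1
    ring
  rw [wfun, Complex.norm_of_nonneg hy.le, h1]
  ring_nf

theorem integrable_norm_pow_mul_wfun (h0 : 0 < (p : ℝ) / 2 + 2 * L + 1)
    (h1 : 0 < 2 * n + 1 - (p : ℝ) / 2) : Integrable fun z : ℂ => ‖z‖ ^ p * wfun n L z := by
  have h := (integrable_fun_norm_addHaar (volume : Measure ℂ)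
    (f := fun y : ℝ => y ^ p * wfun n L y)).2 ?_
  · simpa only [wfun, Complex.norm_real, norm_norm] using h
  · rw [Complex.finrank_real_complex]
    refine (integrableOn_Ioi_rpow_mul_one_add_sq_rpow h0 h1).congr_fun (fun y hy => ?_)
      measurableSet_Ioi
    simp only [← pow_mul_wfun_ofReal hy, Nat.add_one_sub_one, pow_one, smul_eq_mul]

theorem integral_norm_pow_mul_wfun (h0 : 0 < (p : ℝ) / 2 + 2 * L + 1)
    (h1 : 0 < 2 * n + 1 - (p : ℝ) / 2) :
    ∫ z : ℂ, ‖z‖ ^ p * wfun n L z =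
      Real.pi * beta ((p : ℝ) / 2 + 2 * L + 1) (2 * n + 1 - (p : ℝ) / 2) := by
  have h := integral_fun_norm_addHaar (volume : Measure ℂ) fun y : ℝ => y ^ p * wfun n L y
  have hball : (volume : Measure ℂ).real (Metric.ball 0 1) = Real.pi := by
    simp [Measure.real, Complex.volume_ball]
  rw [Complex.finrank_real_complex, hball, setIntegral_congr_fun measurableSet_Ioi fun y hy => by
    rw [pow_one, smul_eq_mul, pow_mul_wfun_ofReal hy],
    integral_Ioi_rpow_mul_one_add_sq_rpow h0 h1] at h
  simp only [wfun, Complex.norm_real, norm_norm] at h ⊢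
  rw [h, nsmul_eq_mul, smul_eq_mul]
  push_cast
  ring

/-- The radial moment `∫ |z|²ᵃ w(z) dA(z)`. -/
def moment (n L : ℝ) (a : ℕ) : ℝ := beta (a + 2 * L + 1) (2 * n + 1 - a)

/-- The skew moments `∫ (z - z̄) w(z) zⁱ z̄ʲ dA(z)`, `i, j < k`, which vanish off the two
diagonals next to the main one. The main diagonal, which is invisible to `bivector`, is set
to zero. -/
def skewMoment (n L : ℝ) (k : ℕ) : Matrix (Fin k) (Fin k) ℝ :=
  Matrix.of fun i j =>
    if (j : ℕ) = i + 1 then moment n L j else if (i : ℕ) = j + 1 then -moment n L i else 0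

theorem integrable_pow_mul_conj_pow_mul_wfun {a b : ℕ} (h0 : 0 < ((a + b : ℕ) : ℝ) / 2 + 2 * L + 1)
    (h1 : 0 < 2 * n + 1 - ((a + b : ℕ) : ℝ) / 2) :
    Integrable fun z : ℂ => z ^ a * starRingEnd ℂ z ^ b * wfun n L z := by
  refine (integrable_norm_pow_mul_wfun h0 h1).mono ?_ (Eventually.of_forall fun z => ?_)
  · have : Measurable (wfun n L) := by unfold wfun; fun_prop
    have := Complex.continuous_conj.measurable
    exact Measurable.aestronglyMeasurable (by fun_prop)
  · simp [pow_add]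

theorem integral_pow_mul_conj_pow_mul_wfun {a : ℕ} (h0 : 0 < (a : ℝ) + 2 * L + 1)
    (h1 : 0 < 2 * n + 1 - a) :
    ∫ z : ℂ, z ^ a * starRingEnd ℂ z ^ a * wfun n L z = (Real.pi * moment n L a : ℝ) := by
  have hp : ((2 * a : ℕ) : ℝ) / 2 = a := by push_cast; ring
  have h := integral_norm_pow_mul_wfun (n := n) (L := L) (p := 2 * a) (by rwa [hp]) (by rwa [hp])
  rw [hp] at h
  rw [moment, ← h, ← integral_complex_ofReal]
  congr with z
  rw [← mul_pow, Complex.mul_conj', ← pow_mul]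
  push_cast
  rfl

end Moments

section SkewMoments

variable {N : ℕ} {n L : ℝ}

theorem pointMatrix_apply (k : ℕ) (z : ℂ) (i j : Fin k) :
    pointMatrix n L k z i j =
      z ^ ((i : ℕ) + 1) * starRingEnd ℂ z ^ (j : ℕ) * wfun n L z -
        z ^ (i : ℕ) * starRingEnd ℂ z ^ ((j : ℕ) + 1) * wfun n L z := by
  simp only [pointMatrix, skewWeight, powerVec, Matrix.smul_apply, Matrix.vecMulVec_apply,
    smul_eq_mul]
  ring

theorem integrable_pow_mul_conj_pow_mul_wfun_of_ne (hn : (N : ℝ) - 1 < n) (hL : -1 < L)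
    {i j : Fin (2 * N)} (hij : i ≠ j) {a b : ℕ} (hab : a + b = i + j + 1) :
    Integrable fun z : ℂ => z ^ a * starRingEnd ℂ z ^ b * wfun n L z := by
  have := Fin.val_ne_of_ne hij
  have hlo : (2 : ℝ) ≤ (a + b : ℕ) := by norm_cast; lia
  have hhi : ((a + b : ℕ) : ℝ) + 2 ≤ 4 * N := by norm_cast; lia
  exact integrable_pow_mul_conj_pow_mul_wfun (by linarith) (by linarith)

theorem integrable_pointMatrix (hn : (N : ℝ) - 1 < n) (hL : -1 < L) (i j : Fin (2 * N))
    (hij : i ≠ j) : Integrable fun z => pointMatrix n L (2 * N) z i j := by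
  simp only [pointMatrix_apply]
  exact (integrable_pow_mul_conj_pow_mul_wfun_of_ne hn hL hij (by ring)).sub
    (integrable_pow_mul_conj_pow_mul_wfun_of_ne hn hL hij (by ring))

theorem integral_pointMatrix (hn : (N : ℝ) - 1 < n) (hL : -1 < L) (i j : Fin (2 * N))
    (hij : i ≠ j) : ∫ z, pointMatrix n L (2 * N) z i j =
      ((Real.pi : ℂ) • (skewMoment n L (2 * N)).map Complex.ofReal) i j := by
  have hoff {a b : ℕ} (hab : a ≠ b) : ∫ z : ℂ, z ^ a * starRingEnd ℂ z ^ b * wfun n L z = 0 := by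
    simpa only [wfun, Complex.norm_real, norm_norm] using
      integral_pow_mul_conj_pow_mul_norm_eq_zero (fun y => wfun n L y) hab
  have hdiag {a : ℕ} (h0 : 0 < a) (h1 : a < 2 * N) :
      ∫ z : ℂ, z ^ a * starRingEnd ℂ z ^ a * wfun n L z = (Real.pi * moment n L a : ℝ) := by
    have h0' : (1 : ℝ) ≤ a := by exact_mod_cast h0
    have h1' : (a : ℝ) + 1 ≤ 2 * N := by exact_mod_cast h1
    exact integral_pow_mul_conj_pow_mul_wfun (by linarith) (by linarith)
  simp only [pointMatrix_apply]
  rw [integral_sub (integrable_pow_mul_conj_pow_mul_wfun_of_ne hn hL hij (by ring))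
    (integrable_pow_mul_conj_pow_mul_wfun_of_ne hn hL hij (by ring))]
  simp only [skewMoment, Matrix.smul_apply, Matrix.map_apply, Matrix.of_apply, smul_eq_mul]
  split_ifs with hj hi
  · rw [hj, hdiag (by lia) (by lia), hoff (by lia)]
    simp
  · rw [hi, hdiag (by lia) (by lia), hoff (by lia)]
    simp
  · rw [hoff (by lia), hoff (by lia)]
    simp

end SkewMoments

section Kernel

open ProbabilityTheory (beta)

/-- The Toeplitz matrix with `1` on the superdiagonal and `-1` on the subdiagonal. -/
def skewShift (k : ℕ) : Matrix (Fin k) (Fin k) ℝ :=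
  Matrix.of fun i j => if (j : ℕ) = i + 1 then 1 else if (i : ℕ) = j + 1 then -1 else 0

/-- The inverse of `skewShift k` for even `k`. -/
def skewShiftInv (k : ℕ) : Matrix (Fin k) (Fin k) ℝ :=
  Matrix.of fun i j =>
    if (i : ℕ) % 2 = 1 ∧ (j : ℕ) % 2 = 0 ∧ j < i then 1
    else if (i : ℕ) % 2 = 0 ∧ (j : ℕ) % 2 = 1 ∧ i < j then -1 else 0

open Matrix in
theorem skewShift_mulVec {k : ℕ} (f : ℕ → ℝ) (i : Fin k) :
    (skewShift k *ᵥ fun j => f j) i =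
      (if (i : ℕ) + 1 < k then f (i + 1) else 0) - if 0 < (i : ℕ) then f (i - 1) else 0 := by
  have hterm (j : ℕ) : (if j = i + 1 then 1 else if (i : ℕ) = j + 1 then -1 else 0) * f j =
      (if j = i + 1 then f (i + 1) else 0) -
        if j = i - 1 then (if 0 < (i : ℕ) then f (i - 1) else 0) else 0 := by
    grind
  simp only [mulVec, dotProduct, skewShift, of_apply]
  rw [Fin.sum_univ_eq_sum_range
    (fun j => (if j = (i : ℕ) + 1 then 1 else if (i : ℕ) = j + 1 then -1 else 0) * f j)]
  simp only [hterm, sum_sub_distrib, sum_ite_eq', mem_range]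
  rw [if_pos (show (i : ℕ) - 1 < k by lia)]

theorem skewShift_mul_skewShiftInv (N : ℕ) : skewShift (2 * N) * skewShiftInv (2 * N) = 1 := by
  ext i l
  refine (skewShift_mulVec (fun j => if j % 2 = 1 ∧ (l : ℕ) % 2 = 0 ∧ (l : ℕ) < j then 1
    else if j % 2 = 0 ∧ (l : ℕ) % 2 = 1 ∧ j < l then -1 else 0) i).trans ?_
  simp only [Matrix.one_apply, Fin.ext_iff]
  have := i.2
  have := l.2
  split_ifs <;> first | lia | norm_num

/-- The constant prefactor of `GK`. -/
def kernelConst (n L : ℝ) : ℝ :=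
  Real.pi * Real.Gamma (2 * n + 2 * L + 2) / 2 ^ (2 * n + 2 * L + 1)

/-- The factor of the coefficients of `GK` belonging to the monomial of degree `j`. -/
def gammaWeight (n L : ℝ) (j : ℕ) : ℝ :=
  (Real.Gamma (j / 2 + L + 1) * Real.Gamma (n - j / 2 + 1 / 2))⁻¹

/-- The coefficient matrix of the polynomial part of `KK`. -/
def kernelMatrix (n L : ℝ) (k : ℕ) : Matrix (Fin k) (Fin k) ℝ :=
  Matrix.of fun i j =>
    kernelConst n L * (gammaWeight n L i * gammaWeight n L j) * skewShiftInv k i j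

variable {n L : ℝ}

-- The duplication formula turns the half-integer steps of `gammaWeight` into those of `moment`.
theorem gammaWeight_mul_gammaWeight_succ (n L : ℝ) (j : ℕ) :
    gammaWeight n L j * gammaWeight n L (j + 1) =
      2 ^ (2 * n + 2 * L) / (Real.pi * (Real.Gamma (j + 2 * L + 2) * Real.Gamma (2 * n - j))) := by
  have h1 := Real.Gamma_mul_Gamma_add_half ((j : ℝ) / 2 + L + 1)
  have h2 := Real.Gamma_mul_Gamma_add_half (n - (j : ℝ) / 2)
  have hpow : (2 : ℝ) ^ (1 - 2 * ((j : ℝ) / 2 + L + 1)) * 2 ^ (1 - 2 * (n - (j : ℝ) / 2)) =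
      (2 ^ (2 * n + 2 * L))⁻¹ := by
    rw [← Real.rpow_add two_pos, ← Real.rpow_neg zero_le_two]
    ring_nf
  have hj : ((j + 1 : ℕ) : ℝ) / 2 + L + 1 = (j : ℝ) / 2 + L + 1 + 1 / 2 := by push_cast; ring
  have hj' : n - ((j + 1 : ℕ) : ℝ) / 2 + 1 / 2 = n - (j : ℝ) / 2 := by push_cast; ring
  calc
    _ = (Real.Gamma (j / 2 + L + 1) * Real.Gamma (j / 2 + L + 1 + 1 / 2) *
          (Real.Gamma (n - j / 2) * Real.Gamma (n - j / 2 + 1 / 2)))⁻¹ := by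
      rw [gammaWeight, gammaWeight, hj, hj', ← mul_inv]
      ring
    _ = (Real.Gamma (2 * (j / 2 + L + 1)) * Real.Gamma (2 * (n - j / 2)) * (√Real.pi * √Real.pi) *
          (2 ^ (1 - 2 * ((j : ℝ) / 2 + L + 1)) * 2 ^ (1 - 2 * (n - (j : ℝ) / 2))))⁻¹ := by
      rw [h1, h2]
      ring
    _ = _ := by
      rw [hpow, Real.mul_self_sqrt Real.pi_pos.le, mul_inv _ (_ ^ _)⁻¹, inv_inv]
      ring_nf

theorem two_mul_moment_mul_kernelConst {j : ℕ} (hL : -1 < L) (hj : (j : ℝ) < 2 * n) :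
    2 * moment n L (j + 1) *
      (kernelConst n L * (gammaWeight n L j * gammaWeight n L (j + 1))) = 1 := by
  have := j.cast_nonneg (α := ℝ)
  have h1 : Real.Gamma (j + 2 * L + 2) ≠ 0 := (Real.Gamma_pos_of_pos (by linarith)).ne'
  have h2 : Real.Gamma (2 * n - j) ≠ 0 := (Real.Gamma_pos_of_pos (by linarith)).ne'
  have h3 : Real.Gamma (2 * n + 2 * L + 2) ≠ 0 := (Real.Gamma_pos_of_pos (by linarith)).ne'
  have hmoment : moment n L (j + 1) = Real.Gamma (j + 2 * L + 2) * Real.Gamma (2 * n - j) /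
      Real.Gamma (2 * n + 2 * L + 2) := by
    rw [moment, beta]
    push_cast
    ring_nf
  rw [hmoment, gammaWeight_mul_gammaWeight_succ, kernelConst, Real.rpow_add_one two_ne_zero]
  generalize Real.Gamma (2 * n + 2 * L + 2) = G at h3 ⊢
  field_simp

theorem skewMoment_apply_eq (hL : -1 < L) {N : ℕ} (hn : (N : ℝ) - 1 < n) (i j : Fin (2 * N)) :
    2 * skewMoment n L (2 * N) i j *
      (kernelConst n L * (gammaWeight n L i * gammaWeight n L j)) = skewShift (2 * N) i j := by
  have hlt {a : ℕ} (ha : a + 1 < 2 * N) : (a : ℝ) < 2 * n := by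
    have : (a : ℝ) + 2 ≤ 2 * N := by exact_mod_cast ha
    linarith
  simp only [skewMoment, skewShift, Matrix.of_apply]
  split_ifs with hj hi
  · rw [hj, two_mul_moment_mul_kernelConst hL (hlt (by lia))]
  · rw [hi, mul_comm (gammaWeight n L _)]
    linear_combination -two_mul_moment_mul_kernelConst hL (hlt (a := j) (by lia))
  · ring

theorem skewMoment_sub_transpose_mul_kernelMatrix (hL : -1 < L) {N : ℕ} (hn : (N : ℝ) - 1 < n) :
    (skewMoment n L (2 * N) - (skewMoment n L (2 * N)).transpose) * kernelMatrix n L (2 * N) =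
      1 := by
  have hskew : skewMoment n L (2 * N) - (skewMoment n L (2 * N)).transpose =
      (2 : ℝ) • skewMoment n L (2 * N) := by
    ext i j
    simp only [skewMoment, Matrix.sub_apply, Matrix.transpose_apply, Matrix.smul_apply,
      Matrix.of_apply, smul_eq_mul]
    grind
  have hweight (i : Fin (2 * N)) : gammaWeight n L i ≠ 0 := by
    have hi : (i : ℝ) + 1 ≤ 2 * N := by exact_mod_cast i.2
    have := Nat.cast_nonneg (α := ℝ) i
    exact inv_ne_zero (mul_ne_zero (Real.Gamma_pos_of_pos (by linarith)).ne'
      (Real.Gamma_pos_of_pos (by linarith)).ne')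
  ext i l
  refine mul_left_cancel₀ (hweight i) ?_
  calc gammaWeight n L i *
        ((skewMoment n L (2 * N) - (skewMoment n L (2 * N)).transpose) *
          kernelMatrix n L (2 * N)) i l
    _ = gammaWeight n L l * ∑ j, 2 * skewMoment n L (2 * N) i j *
          (kernelConst n L * (gammaWeight n L i * gammaWeight n L j)) *
          skewShiftInv (2 * N) j l := by
      simp only [hskew, Matrix.mul_apply, Matrix.smul_apply, smul_eq_mul, kernelMatrix,
        Matrix.of_apply, mul_sum]
      exact sum_congr rfl fun j _ => by ring
    _ = gammaWeight n L l * (1 : Matrix (Fin (2 * N)) (Fin (2 * N)) ℝ) i l := by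
      simp only [skewMoment_apply_eq hL hn, ← Matrix.mul_apply, skewShift_mul_skewShiftInv]
    _ = gammaWeight n L i * (1 : Matrix (Fin (2 * N)) (Fin (2 * N)) ℝ) i l := by
      rcases eq_or_ne i l with rfl | hil
      · rfl
      · simp [hil]

theorem map_skewMoment_sub_transpose_mul_map_kernelMatrix (hL : -1 < L) {N : ℕ}
    (hn : (N : ℝ) - 1 < n) :
    ((skewMoment n L (2 * N)).map Complex.ofReal -
        ((skewMoment n L (2 * N)).map Complex.ofReal).transpose) *
      (kernelMatrix n L (2 * N)).map Complex.ofReal = 1 := by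
  have h := congrArg Complex.ofRealHom.mapMatrix (skewMoment_sub_transpose_mul_kernelMatrix hL hn)
  rwa [map_mul, map_sub, map_one] at h

theorem sum_range_two_mul {M : Type*} [AddCommMonoid M] (f : ℕ → M) (N : ℕ) :
    ∑ a ∈ range (2 * N), f a = ∑ k ∈ range N, (f (2 * k) + f (2 * k + 1)) := by
  induction N with
  | zero => simp
  | succ N ih => rw [mul_add_one, sum_range_succ, sum_range_succ, ih, sum_range_succ, add_assoc]

theorem sum_skewShiftInv_smul {E : Type*} [AddCommGroup E] [Module ℝ E] (N : ℕ)
    (F : ℕ → ℕ → E) :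
    ∑ i, ∑ j, skewShiftInv (2 * N) i j • F i j =
      ∑ k ∈ range N, ∑ l ∈ range (k + 1), (F (2 * k + 1) (2 * l) - F (2 * l) (2 * k + 1)) := by
  set e : ℕ → ℕ → ℝ := fun a b => if a % 2 = 1 ∧ b % 2 = 0 ∧ b < a then 1
    else if a % 2 = 0 ∧ b % 2 = 1 ∧ a < b then -1 else 0
  calc ∑ i, ∑ j, skewShiftInv (2 * N) i j • F i j
    _ = ∑ a ∈ range (2 * N), ∑ b ∈ range (2 * N), e a b • F a b := by
      rw [← Fin.sum_univ_eq_sum_range]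
      exact sum_congr rfl fun i _ => Fin.sum_univ_eq_sum_range (fun b => e i b • F i b) _
    _ = ∑ k ∈ range N, ∑ l ∈ range N, (e (2 * k + 1) (2 * l) • F (2 * k + 1) (2 * l) +
          e (2 * l) (2 * k + 1) • F (2 * l) (2 * k + 1)) := by
      have h0 (k l : ℕ) : e (2 * k) (2 * l) = 0 := by grind
      have h1 (k l : ℕ) : e (2 * k + 1) (2 * l + 1) = 0 := by grind
      simp only [sum_range_two_mul, h0, h1, zero_smul, sum_add_distrib, sum_const_zero, zero_add,
        add_zero]
      exact congrArg (_ + ·) sum_comm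
    _ = ∑ k ∈ range N, ∑ l ∈ range N,
          if l < k + 1 then F (2 * k + 1) (2 * l) - F (2 * l) (2 * k + 1) else 0 := by
      refine sum_congr rfl fun k _ => sum_congr rfl fun l _ => ?_
      have h0 : e (2 * k + 1) (2 * l) = if l < k + 1 then 1 else 0 := by grind
      have h1 : e (2 * l) (2 * k + 1) = if l < k + 1 then -1 else 0 := by grind
      rw [h0, h1]
      split_ifs <;> simp [sub_eq_add_neg]
    _ = _ := sum_congr rfl fun k hk => by
      rw [← sum_filter]
      congr 1
      grind

end Kernel

section PolyKernel

variable {n L : ℝ}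

/-- The polynomial part of `KK`: the bilinear form of `kernelMatrix` in powers of `ζ` and `η`. -/
def polyKernel (n L : ℝ) (k : ℕ) (ζ η : ℂ) : ℂ :=
  ((kernelMatrix n L k).map Complex.ofReal).toBilin' (powerVec k ζ) (powerVec k η)

theorem polyKernel_conj (k : ℕ) (ζ η : ℂ) :
    polyKernel n L k (starRingEnd ℂ ζ) (starRingEnd ℂ η) =
      starRingEnd ℂ (polyKernel n L k ζ η) := by
  simp only [polyKernel, Matrix.toBilin'_apply, Matrix.map_apply, powerVec, map_sum, map_mul,
    map_pow, Complex.conj_ofReal]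

theorem polyKernel_eq_sum (N : ℕ) (ζ η : ℂ) :
    polyKernel n L (2 * N) ζ η = kernelConst n L *
      ∑ k ∈ range N, ∑ l ∈ range (k + 1), (gammaWeight n L (2 * k + 1) * gammaWeight n L (2 * l)) *
        (ζ ^ (2 * k + 1) * η ^ (2 * l) - ζ ^ (2 * l) * η ^ (2 * k + 1)) := by
  have h := sum_skewShiftInv_smul N fun i j =>
    (kernelConst n L * (gammaWeight n L i * gammaWeight n L j) * (ζ ^ i * η ^ j) : ℂ)
  calc polyKernel n L (2 * N) ζ η
    _ = ∑ i, ∑ j, skewShiftInv (2 * N) i j •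
          (kernelConst n L * (gammaWeight n L i * gammaWeight n L j) *
            (ζ ^ (i : ℕ) * η ^ (j : ℕ)) : ℂ) := by
      simp only [polyKernel, Matrix.toBilin'_apply, Matrix.map_apply, powerVec, kernelMatrix,
        Matrix.of_apply, Complex.real_smul]
      refine sum_congr rfl fun i _ => sum_congr rfl fun j _ => ?_
      push_cast
      ring
    _ = _ := by
      rw [h]
      simp only [mul_sum]
      exact sum_congr rfl fun k _ => sum_congr rfl fun l _ => by ring

theorem GK_eq_sum (N : ℕ) {ζ η : ℂ} (hζ : ζ ≠ 0) (hη : η ≠ 0) :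
    GK N n L ζ η = ζ ^ ((2 * L : ℝ) : ℂ) * η ^ ((2 * L : ℝ) : ℂ) * (kernelConst n L *
      ∑ k ∈ range N, ∑ l ∈ range (k + 1), (gammaWeight n L (2 * k + 1) * gammaWeight n L (2 * l)) *
        (ζ ^ (2 * k + 1) * η ^ (2 * l))) := by
  have hpow {z : ℂ} (hz : z ≠ 0) {s : ℝ} {j : ℕ} (hs : s = 2 * L + j) :
      z ^ (s : ℂ) = z ^ ((2 * L : ℝ) : ℂ) * z ^ j := by
    rw [hs, Complex.ofReal_add, Complex.cpow_add _ _ hz, Complex.ofReal_natCast,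
      Complex.cpow_natCast]
  have hconst : (Real.pi : ℂ) * Complex.Gamma ((2 * n + 2 * L + 2 : ℝ) : ℂ) /
      (2 : ℂ) ^ ((2 * n + 2 * L + 1 : ℝ) : ℂ) = kernelConst n L := by
    rw [kernelConst, Complex.Gamma_ofReal]
    push_cast [Complex.ofReal_cpow zero_le_two]
    rfl
  have hodd (k : ℕ) : (gammaWeight n L (2 * k + 1) : ℂ) =
      (Complex.Gamma ((k + L + 3 / 2 : ℝ) : ℂ) * Complex.Gamma ((n - k : ℝ) : ℂ))⁻¹ := by
    rw [gammaWeight, Complex.Gamma_ofReal, Complex.Gamma_ofReal]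
    push_cast
    ring_nf
  have heven (l : ℕ) : (gammaWeight n L (2 * l) : ℂ) =
      (Complex.Gamma ((n - l + 1 / 2 : ℝ) : ℂ) * Complex.Gamma ((l + L + 1 : ℝ) : ℂ))⁻¹ := by
    rw [gammaWeight, Complex.Gamma_ofReal, Complex.Gamma_ofReal]
    push_cast
    ring_nf
  rw [GK, hconst, mul_left_comm]
  congr 1
  simp only [mul_sum]
  refine sum_congr rfl fun k _ => sum_congr rfl fun l _ => ?_
  rw [hpow hζ (j := 2 * k + 1) (by push_cast; ring), hpow hη (j := 2 * l) (by push_cast; ring),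
    hodd, heven, ← mul_inv, div_eq_mul_inv]
  ring

theorem KK_eq_polyKernel (N : ℕ) {ζ η : ℂ} (hζ : ζ ≠ 0) (hη : η ≠ 0) :
    KK N n L ζ η =
      ζ ^ ((2 * L : ℝ) : ℂ) * η ^ ((2 * L : ℝ) : ℂ) * polyKernel n L (2 * N) ζ η := by
  rw [KK, GK_eq_sum N hζ hη, GK_eq_sum N hη hζ, polyKernel_eq_sum,
    mul_comm (η ^ ((2 * L : ℝ) : ℂ)), ← mul_sub, ← mul_sub]
  simp only [← sum_sub_distrib, ← mul_sub]
  simp only [mul_comm (η ^ _)]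

theorem cpow_mul_conj_cpow {z : ℂ} (hz : starRingEnd ℂ z ≠ z) :
    z ^ ((2 * L : ℝ) : ℂ) * starRingEnd ℂ z ^ ((2 * L : ℝ) : ℂ) = (‖z‖ ^ (4 * L) : ℝ) := by
  have hz0 : 0 < ‖z‖ := norm_pos_iff.2 fun h => hz (by simp [h])
  have harg : z.arg ≠ Real.pi := fun h =>
    hz (Complex.conj_eq_iff_im.2 (Complex.arg_eq_pi_iff.1 h).2)
  rw [← Complex.conj_ofReal (2 * L), Complex.conj_cpow _ _ harg]
  simp only [Complex.conj_ofReal]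
  rw [Complex.mul_conj', Complex.norm_cpow_real, ← Complex.ofReal_pow, pow_two,
    ← Real.rpow_add hz0]
  ring_nf

theorem KK_self_conj (N : ℕ) {z : ℂ} (hz : starRingEnd ℂ z ≠ z) :
    KK N n L z (starRingEnd ℂ z) =
      (‖z‖ ^ (4 * L) : ℝ) * polyKernel n L (2 * N) z (starRingEnd ℂ z) := by
  have hz0 : z ≠ 0 := fun h => hz (by simp [h])
  rw [KK_eq_polyKernel N hz0 ((map_ne_zero _).2 hz0), cpow_mul_conj_cpow hz]

theorem norm_KK_sq (N : ℕ) {ζ η : ℂ} (hζ : ζ ≠ 0) (hη : η ≠ 0) :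
    ‖KK N n L ζ η‖ ^ 2 =
      ‖ζ‖ ^ (4 * L) * ‖η‖ ^ (4 * L) * ‖polyKernel n L (2 * N) ζ η‖ ^ 2 := by
  have hpow (z : ℂ) : (‖z‖ ^ (2 * L)) ^ 2 = ‖z‖ ^ (4 * L) := by
    rw [← Real.rpow_mul_natCast (norm_nonneg z)]
    ring_nf
  rw [KK_eq_polyKernel N hζ hη, norm_mul, norm_mul, Complex.norm_cpow_real,
    Complex.norm_cpow_real, mul_pow, mul_pow, hpow, hpow]

end PolyKernel

section Normalization

variable {n L : ℝ}

theorem wfun_pos {z : ℂ} (hz : z ≠ 0) : 0 < wfun n L z := by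
  have := norm_pos_iff.2 hz
  unfold wfun
  positivity

theorem continuousAt_wfun {z : ℂ} (hz : z ≠ 0) : ContinuousAt (wfun n L) z := by
  have hpos : 0 < 1 + ‖z‖ ^ 2 := by positivity
  exact (continuousAt_id.norm.rpow_const (.inl (norm_ne_zero_iff.2 hz))).mul
    ((continuousAt_const.add (continuousAt_id.norm.pow 2)).rpow_const (.inl hpos.ne'))

theorem jointDen_nonneg {m : ℕ} (z : Fin m → ℂ) : 0 ≤ jointDen m n L z := by
  unfold jointDen wfun
  positivity

theorem jointDen_pos {m : ℕ} {z : Fin m → ℂ} (hinj : Function.Injective z)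
    (him : ∀ j, 0 < (z j).im) : 0 < jointDen m n L z := by
  have hconj (j k : Fin m) : 0 < ‖z j - starRingEnd ℂ (z k)‖ := by
    refine norm_pos_iff.2 fun h => ?_
    have := congrArg Complex.im h
    simp only [Complex.sub_im, Complex.conj_im, Complex.zero_im] at this
    linarith [him j, him k]
  refine mul_pos (prod_pos fun j _ => prod_pos fun k hk => ?_) (prod_pos fun j _ => ?_)
  · have := norm_pos_iff.2 (sub_ne_zero.2 (hinj.ne (mem_Ioi.1 hk).ne))
    have := hconj j k
    positivity
  · have := hconj j j
    have := wfun_pos (n := n) (L := L) (z := z j) fun h => by simpa [h] using him j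
    positivity

theorem continuousAt_jointDen {m : ℕ} {z : Fin m → ℂ} (hz : ∀ j, z j ≠ 0) :
    ContinuousAt (jointDen m n L) z := by
  have hw (j : Fin m) : ContinuousAt (fun y : Fin m → ℂ => wfun n L (y j)) z :=
    (continuousAt_wfun (hz j)).comp (f := fun y : Fin m → ℂ => y j)
      (continuousAt_apply j z)
  have := Complex.continuous_conj
  unfold jointDen
  fun_prop

variable {N : ℕ}

theorem integrable_jointDen (hn : (N : ℝ) - 1 < n) (hL : -1 < L) :
    Integrable (jointDen N n L) := by
  have h := integrable_map_prod_ofFn_bivector (detFunctional ℂ (2 * N))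
    (integrable_pointMatrix hn hL) N
  simp only [← ofReal_jointDen] at h
  exact h.re

theorem ZN_pos (hn : (N : ℝ) - 1 < n) (hL : -1 < L) : 0 < ZN N n L := by
  set z : Fin N → ℂ := fun j => ((j : ℝ) + 1 : ℝ) * Complex.I
  have him (j : Fin N) : (z j).im = j + 1 := by simp [z]
  have hpos : 0 < jointDen N n L z := by
    refine jointDen_pos (fun j k hjk => ?_) fun j => ?_
    · simpa [him, Fin.ext_iff] using congrArg Complex.im hjk
    · rw [him]
      positivity
  have hcont : ContinuousAt (jointDen N n L) z := by
    refine continuousAt_jointDen fun j h => ?_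
    have := him j
    rw [h, Complex.zero_im] at this
    linarith [(j : ℕ).cast_nonneg (α := ℝ)]
  refine mul_pos (pow_pos (inv_pos.2 Real.pi_pos) N) ?_
  rw [integral_pos_iff_support_of_nonneg jointDen_nonneg (integrable_jointDen hn hL)]
  exact Measure.measure_pos_of_mem_nhds volume (hcont.eventually_ne hpos.ne')

theorem integral_detFunctional_mul_prod_bivector (hn : (N : ℝ) - 1 < n) (hL : -1 < L)
    (a : ExteriorAlgebra ℂ (Fin (2 * N) → ℂ)) (m : ℕ) :
    ∫ z : Fin m → ℂ, detFunctional ℂ (2 * N)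
        (a * (List.ofFn fun j => bivector (pointMatrix n L (2 * N) (z j))).prod) =
      Real.pi ^ m * detFunctional ℂ (2 * N)
        (a * bivector ((skewMoment n L (2 * N)).map Complex.ofReal) ^ m) := by
  have h := integral_map_prod_ofFn_bivector (detFunctional ℂ (2 * N) ∘ₗ LinearMap.mulLeft ℂ a)
    (integrable_pointMatrix hn hL) (integral_pointMatrix hn hL) m
  rw [bivector_smul, smul_pow, map_smul, smul_eq_mul] at h
  exact h

theorem ofReal_ZN (hn : (N : ℝ) - 1 < n) (hL : -1 < L) :
    (ZN N n L : ℂ) = detFunctional ℂ (2 * N)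
      (bivector ((skewMoment n L (2 * N)).map Complex.ofReal) ^ N) := by
  have h := integral_detFunctional_mul_prod_bivector hn hL 1 N
  simp only [one_mul, ← ofReal_jointDen] at h
  rw [integral_complex_ofReal] at h
  rw [ZN, Complex.ofReal_mul, h, Complex.ofReal_pow, Complex.ofReal_inv, ← mul_assoc, ← mul_pow,
    inv_mul_cancel₀ (by exact_mod_cast Real.pi_ne_zero), one_pow, one_mul]

end Normalization

section TwoPoint

variable {m : ℕ} {n L : ℝ}

theorem ofReal_jointDen_cons_cons (ζ η : ℂ) (z : Fin m → ℂ) :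
    (jointDen (m + 1 + 1) n L (Fin.cons ζ (Fin.cons η z)) : ℂ) =
      detFunctional ℂ (2 * (m + 2))
        (bivector (pointMatrix n L (2 * (m + 2)) ζ) * bivector (pointMatrix n L (2 * (m + 2)) η) *
          (List.ofFn fun j => bivector (pointMatrix n L (2 * (m + 2)) (z j))).prod) := by
  rw [ofReal_jointDen, List.ofFn_succ, List.ofFn_succ]
  simp only [List.prod_cons, Fin.cons_zero, Fin.cons_succ, mul_assoc]

theorem ZN_mul_R2 (hn : ((m + 2 : ℕ) : ℝ) - 1 < n) (hL : -1 < L) (ζ η : ℂ) :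
    (ZN (m + 2) n L * R2 (m + 2) n L ζ η : ℂ) = (m + 2) * (m + 1) *
      detFunctional ℂ (2 * (m + 2))
        (bivector (pointMatrix n L (2 * (m + 2)) ζ) * bivector (pointMatrix n L (2 * (m + 2)) η) *
          bivector ((skewMoment n L (2 * (m + 2))).map Complex.ofReal) ^ m) := by
  have h := integral_detFunctional_mul_prod_bivector hn hL
    (bivector (pointMatrix n L (2 * (m + 2)) ζ) * bivector (pointMatrix n L (2 * (m + 2)) η)) m
  simp only [← ofReal_jointDen_cons_cons] at h
  rw [integral_complex_ofReal] at h
  have hZ : (ZN (m + 2) n L : ℂ) ≠ 0 := by exact_mod_cast (ZN_pos hn hL).ne'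
  have hpi : (Real.pi : ℂ) ≠ 0 := by exact_mod_cast Real.pi_ne_zero
  have hR2 : R2 (m + 2) n L ζ η = ((m + 2 : ℕ) * ((m + 2 : ℕ) - 1) : ℝ) * (ZN (m + 2) n L)⁻¹ *
      Real.pi⁻¹ ^ m * ∫ z : Fin m → ℂ, jointDen (m + 1 + 1) n L (Fin.cons ζ (Fin.cons η z)) := rfl
  rw [hR2, Complex.ofReal_mul, h]
  push_cast
  rw [inv_pow]
  field_simp
  ring

theorem detFunctional_mul_bivector_skewMoment_pow (hn : ((m + 2 : ℕ) : ℝ) - 1 < n) (hL : -1 < L)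
    (a b c d : ℂ) :
    (m + 2) * (m + 1) * detFunctional ℂ (2 * (m + 2))
        (ι ℂ (powerVec _ a) * (ι ℂ (powerVec _ b) * (ι ℂ (powerVec _ c) * (ι ℂ (powerVec _ d) *
          bivector ((skewMoment n L (2 * (m + 2))).map Complex.ofReal) ^ m)))) =
      (polyKernel n L (2 * (m + 2)) a b * polyKernel n L (2 * (m + 2)) c d -
        polyKernel n L (2 * (m + 2)) a c * polyKernel n L (2 * (m + 2)) b d +
        polyKernel n L (2 * (m + 2)) a d * polyKernel n L (2 * (m + 2)) b c) *
      ZN (m + 2) n L := by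
  have h := congrArg (detFunctional ℂ (2 * (m + 2))) (ι_mul_ι_mul_ι_mul_ι_mul_bivector_pow
    (map_skewMoment_sub_transpose_mul_map_kernelMatrix hL hn) (Fintype.card_fin _)
    (powerVec _ a) (powerVec _ b) (powerVec _ c) (powerVec _ d))
  rwa [map_smul, map_smul, ← ofReal_ZN hn hL] at h

theorem R2_eq_polyKernel (hn : ((m + 2 : ℕ) : ℝ) - 1 < n) (hL : -1 < L) (ζ η : ℂ) :
    (R2 (m + 2) n L ζ η : ℂ) = skewWeight n L ζ * skewWeight n L η *
      (polyKernel n L (2 * (m + 2)) ζ (starRingEnd ℂ ζ) *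
          polyKernel n L (2 * (m + 2)) η (starRingEnd ℂ η) -
        (‖polyKernel n L (2 * (m + 2)) ζ η‖ ^ 2 : ℝ) +
        (‖polyKernel n L (2 * (m + 2)) ζ (starRingEnd ℂ η)‖ ^ 2 : ℝ)) := by
  have hZ : (ZN (m + 2) n L : ℂ) ≠ 0 := by exact_mod_cast (ZN_pos hn hL).ne'
  have hconj : polyKernel n L (2 * (m + 2)) (starRingEnd ℂ ζ) η =
      starRingEnd ℂ (polyKernel n L (2 * (m + 2)) ζ (starRingEnd ℂ η)) := by
    rw [← polyKernel_conj, Complex.conj_conj]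
  have hpfaff := detFunctional_mul_bivector_skewMoment_pow hn hL ζ (starRingEnd ℂ ζ) η
    (starRingEnd ℂ η)
  rw [polyKernel_conj, hconj, Complex.mul_conj', Complex.mul_conj'] at hpfaff
  refine mul_left_cancel₀ hZ ?_
  rw [ZN_mul_R2 hn hL, bivector_pointMatrix, bivector_pointMatrix]
  simp only [smul_mul_assoc, mul_smul_comm, map_smul, smul_eq_mul, mul_assoc]
  push_cast
  linear_combination skewWeight n L ζ * skewWeight n L η * hpfaff

theorem wfun_eq_div (z : ℂ) :
    wfun n L z = ‖z‖ ^ (4 * L) / (1 + ‖z‖ ^ 2) ^ (2 * n + 2 * L + 2) := by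
  rw [wfun, div_eq_mul_inv, ← Real.rpow_neg (by positivity)]
  ring_nf

theorem two_point_correlation_general (N : ℕ) (n L : ℝ) (hN : 2 ≤ N) (hn : (N : ℝ) - 1 < n)
    (hL : -1 < L) (ζ η : ℂ) :
    (R2 N n L ζ η : ℂ) =
      (starRingEnd ℂ ζ - ζ) * (starRingEnd ℂ η - η) /
        ((((1 + ‖ζ‖ ^ 2) * (1 + ‖η‖ ^ 2)) ^ (2 * n + 2 * L + 2) : ℝ) : ℂ) *
      (KK N n L ζ (starRingEnd ℂ ζ) * KK N n L η (starRingEnd ℂ η)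
        - ((‖KK N n L ζ η‖ ^ 2 : ℝ) : ℂ)
        + ((‖KK N n L ζ (starRingEnd ℂ η)‖ ^ 2 : ℝ) : ℂ)) := by
  obtain ⟨m, rfl⟩ := Nat.exists_eq_add_of_le' hN
  rw [R2_eq_polyKernel hn hL]
  by_cases hζ : starRingEnd ℂ ζ = ζ
  · simp [skewWeight, hζ]
  by_cases hη : starRingEnd ℂ η = η
  · simp [skewWeight, hη]
  have hζ0 : ζ ≠ 0 := fun h => hζ (by simp [h])
  have hη0 : η ≠ 0 := fun h => hη (by simp [h])
  rw [KK_self_conj _ hζ, KK_self_conj _ hη, norm_KK_sq _ hζ0 hη0,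
    norm_KK_sq _ hζ0 ((map_ne_zero _).2 hη0), Complex.norm_conj, skewWeight, skewWeight,
    wfun_eq_div, wfun_eq_div, Real.mul_rpow (by positivity) (by positivity)]
  push_cast
  ring

end TwoPoint

/-- Proposition 1.1(a), k = 2: the two-point correlation function of the
symplectic induced spherical ensemble. -/
theorem two_point_correlation (N n M : ℕ) (L : ℝ) (hN : 2 ≤ N) (hn : N ≤ n)
    (hL : 0 ≤ L) (hM : 2*L = (M : ℝ)) (ζ η : ℂ) :
    (R2 N n L ζ η : ℂ) =
      ((starRingEnd ℂ) ζ - ζ) * ((starRingEnd ℂ) η - η) /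
        ((((1 + ‖ζ‖ ^ 2) * (1 + ‖η‖ ^ 2)) ^ (2*(n:ℝ)+2*L+2) : ℝ) : ℂ) *
      (KK N n L ζ ((starRingEnd ℂ) ζ) * KK N n L η ((starRingEnd ℂ) η)
        - ((‖KK N n L ζ η‖ ^ 2 : ℝ) : ℂ)
        + ((‖KK N n L ζ ((starRingEnd ℂ) η)‖ ^ 2 : ℝ) : ℂ)) :=
  two_point_correlation_general N n L hN
    (by linarith [show (N : ℝ) ≤ n from Nat.cast_le.2 hn]) (by linarith) ζ η

end SI
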